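/- Theorem 2.1 (Rate separation for uniform diffusion). Suppose the noise-schedule assumption holds at every σ ∈ (0,1). Fix x ∈ X, a coordinate h ∈ {1,…,H}, a token a ≠ x^h, and set z = x^{h→a} and ρ = p_data(proj_D(z))/p_data(proj_D(x)). For each σ ∈ (0,1), with t = t_σ(T), the limit L(σ) := lim_{T→∞} q^h_{t−1|t}(a | x)/(β^{(T)}_t / K) exists. Moreover there exist C > 0 and σ₀ ∈ (0,1) such that for all σ ∈ (0,σ₀): (i) if d(z,D) < d(x,D) (toward support) then |L(σ) − (σ/K)^{−1}·ρ| ≤ C; (ii) if d(z,D) = d(x,D) (same distance) then |L(σ) − ρ| ≤ C·σ; (iii) if d(z,D) > d(x,D) (away from support) then |L(σ) − (σ/K)·ρ| ≤ C·σ². -/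

import Mathlib

open scoped Classical
open Filter

/-- Uniform-corrupted marginal `q_σ(x)`. -/
noncomputable def qUnif (K H : ℕ) (p : (Fin H → Fin K) → ℝ) (σ : ℝ)
    (x : Fin H → Fin K) : ℝ :=
  ∑ x0 : Fin H → Fin K, p x0 *
    ∏ i : Fin H, ((1 - σ) * (if x i = x0 i then (1 : ℝ) else 0) + σ / K)

/-- Hamming distance from `x` to the support `D = {z : p z ≠ 0}` of `p`. -/
noncomputable def distSupp (K H : ℕ) (p : (Fin H → Fin K) → ℝ)
    (x : Fin H → Fin K) : ℕ :=
  sInf {n : ℕ | ∃ z : Fin H → Fin K, p z ≠ 0 ∧ hammingDist x z = n}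

/-- Total `p`-mass of the set `proj_D(x)` of nearest in-support strings to `x`. -/
noncomputable def projMass (K H : ℕ) (p : (Fin H → Fin K) → ℝ)
    (x : Fin H → Fin K) : ℝ :=
  ∑ z ∈ Finset.univ.filter
      (fun z : Fin H → Fin K => p z ≠ 0 ∧ hammingDist x z = distSupp K H p x), p z

/-- Cumulative noise level `σ^{(T)}_t = 1 − ∏_{s=1}^t (1 − β^{(T)}_s)`. -/
noncomputable def cumNoise (β : ℕ → ℕ → ℝ) (T t : ℕ) : ℝ :=
  1 - ∏ s ∈ Finset.Icc 1 t, (1 - β T s)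

/-- One-step uniform forward kernel `q_{t|t−1}(y'|y)` with per-step rate `b`. -/
noncomputable def stepUnif (K H : ℕ) (b : ℝ) (y' y : Fin H → Fin K) : ℝ :=
  ∏ i : Fin H, ((1 - b) * (if y' i = y i then (1 : ℝ) else 0) + b / K)

/-- Exact single-token reverse probability `q^h_{t−1|t}(a|x)`. -/
noncomputable def revUnif (K H : ℕ) (p : (Fin H → Fin K) → ℝ) (β : ℕ → ℕ → ℝ)
    (T t : ℕ) (h : Fin H) (a : Fin K) (x : Fin H → Fin K) : ℝ :=
  (∑ y ∈ Finset.univ.filter (fun y : Fin H → Fin K => y h = a),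
      qUnif K H p (cumNoise β T (t - 1)) y * stepUnif K H (β T t) x y)
    / qUnif K H p (cumNoise β T t) x

/-- The marginal with the leading power of `σ / K` factored out. -/
noncomputable def gAux (K H : ℕ) (p : (Fin H → Fin K) → ℝ) (σ : ℝ)
    (x : Fin H → Fin K) : ℝ :=
  ∑ x0 : Fin H → Fin K, p x0 *
    ((1 - σ + σ / K) ^ (Finset.univ.filter (fun i => x i = x0 i)).card *
      (σ / K) ^ (hammingDist x x0 - distSupp K H p x))

lemma distSupp_le (K H : ℕ) (p : (Fin H → Fin K) → ℝ) (x z : Fin H → Fin K) (hz : p z ≠ 0) :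
    distSupp K H p x ≤ hammingDist x z :=
  Nat.sInf_le ⟨z, hz, rfl⟩

lemma distSupp_mem (K H : ℕ) (p : (Fin H → Fin K) → ℝ) (x : Fin H → Fin K)
    (hp1 : ∑ v, p v = 1) : ∃ z, p z ≠ 0 ∧ hammingDist x z = distSupp K H p x := by
  have : ∃ z, p z ≠ 0 := by
    by_contra! hc
    simp [hc] at hp1
  obtain ⟨z, hz⟩ := this
  exact Nat.sInf_mem (s := {n : ℕ | ∃ z : Fin H → Fin K, p z ≠ 0 ∧ hammingDist x z = n})
    ⟨_, z, hz, rfl⟩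

lemma distSupp_lip (K H : ℕ) (p : (Fin H → Fin K) → ℝ) (x y : Fin H → Fin K)
    (hp1 : ∑ v, p v = 1) : distSupp K H p x ≤ hammingDist x y + distSupp K H p y := by
  obtain ⟨z, hz, hd⟩ := distSupp_mem K H p y hp1
  rw [← hd]
  exact (distSupp_le K H p x z hz).trans (hammingDist_triangle x y z)

lemma hammingDist_update_le (K H : ℕ) (x : Fin H → Fin K) (h : Fin H) (a : Fin K) :
    hammingDist x (Function.update x h a) ≤ 1 := by
  unfold hammingDist
  calc _ ≤ ({h} : Finset (Fin H)).card := by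
        apply Finset.card_le_card
        intro i hi
        by_contra hne
        simp only [Finset.mem_singleton] at hne
        simp [Function.update_of_ne hne] at hi
    _ = 1 := by simp

lemma qUnif_eq (K H : ℕ) (p : (Fin H → Fin K) → ℝ) (σ : ℝ) (x : Fin H → Fin K) :
    qUnif K H p σ x = (σ / K) ^ distSupp K H p x * gAux K H p σ x := by
  unfold qUnif gAux
  rw [Finset.mul_sum]
  refine Finset.sum_congr rfl fun x0 _ => ?_
  by_cases h0 : p x0 = 0
  · simp [h0]
  have hle := distSupp_le K H p x x0 h0
  have : ∏ i : Fin H, ((1 - σ) * (if x i = x0 i then (1 : ℝ) else 0) + σ / K)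
      = (1 - σ + σ / K) ^ (Finset.univ.filter (fun i => x i = x0 i)).card *
        (σ / K) ^ hammingDist x x0 := by
    have : ∀ i : Fin H, ((1 - σ) * (if x i = x0 i then (1 : ℝ) else 0) + σ / K)
        = if x i = x0 i then (1 - σ + σ / K) else σ / K := by
      intro i; split_ifs <;> simp
    simp_rw [this]
    rw [Finset.prod_ite, Finset.prod_const, Finset.prod_const]
    rfl
  rw [this]
  conv_lhs => rw [← Nat.sub_add_cancel hle, pow_add]
  ring

lemma gAux_zero (K H : ℕ) (p : (Fin H → Fin K) → ℝ) (x : Fin H → Fin K) :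
    gAux K H p 0 x = projMass K H p x := by
  unfold gAux projMass
  rw [Finset.sum_filter]
  refine Finset.sum_congr rfl fun x0 _ => ?_
  by_cases h0 : p x0 = 0
  · simp [h0]
  have hle := distSupp_le K H p x x0 h0
  by_cases hd : hammingDist x x0 = distSupp K H p x
  · simp [h0, hd]
  · have : hammingDist x x0 - distSupp K H p x ≠ 0 := by omega
    simp [hd, this]

lemma gAux_diff (K H : ℕ) (p : (Fin H → Fin K) → ℝ) (x : Fin H → Fin K) :
    Differentiable ℝ (fun σ => gAux K H p σ x) := by
  unfold gAux
  fun_prop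

lemma projMass_pos (K H : ℕ) (p : (Fin H → Fin K) → ℝ) (hp0 : ∀ v, 0 ≤ p v)
    (hp1 : ∑ v, p v = 1) (x : Fin H → Fin K) : 0 < projMass K H p x := by
  obtain ⟨z, hz, hd⟩ := distSupp_mem K H p x hp1
  unfold projMass
  refine Finset.sum_pos' (fun i _ => hp0 i) ⟨z, by simp [hz, hd], ?_⟩
  exact lt_of_le_of_ne (hp0 z) (Ne.symm hz)

lemma qUnif_pos (K H : ℕ) (hK : 2 ≤ K) (p : (Fin H → Fin K) → ℝ) (hp0 : ∀ v, 0 ≤ p v)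
    (hp1 : ∑ v, p v = 1) (x : Fin H → Fin K) (σ : ℝ) (hσ : σ ∈ Set.Ioo (0 : ℝ) 1) :
    0 < qUnif K H p σ x := by
  obtain ⟨z, hz, -⟩ := distSupp_mem K H p x hp1
  have hprod : ∀ x0 : Fin H → Fin K,
      0 < ∏ i : Fin H, ((1 - σ) * (if x i = x0 i then (1 : ℝ) else 0) + σ / K) := by
    intro x0
    refine Finset.prod_pos fun i _ => ?_
    have hs : 0 < σ / K := div_pos hσ.1 (by positivity)
    have := hσ.2
    split_ifs
    · linarith
    · linarith
  unfold qUnif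
  refine Finset.sum_pos' (fun i _ => mul_nonneg (hp0 i) (hprod i).le) ⟨z, by simp, ?_⟩
  exact mul_pos (lt_of_le_of_ne (hp0 z) (Ne.symm hz)) (hprod z)

lemma qUnif_cont (K H : ℕ) (p : (Fin H → Fin K) → ℝ) (x : Fin H → Fin K) :
    Continuous (fun σ => qUnif K H p σ x) := by
  unfold qUnif
  fun_prop

lemma cumNoise_pred (β : ℕ → ℕ → ℝ) (T t : ℕ) (ht : 1 ≤ t) (hb : β T t < 1) :
    cumNoise β T (t - 1) = 1 - (1 - cumNoise β T t) / (1 - β T t) := by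
  obtain ⟨s, rfl⟩ : ∃ s, t = s + 1 := ⟨t - 1, by omega⟩
  have : 1 - β T (s + 1) ≠ 0 := by linarith
  unfold cumNoise
  rw [Finset.prod_Icc_succ_top (by omega)]
  simp only [Nat.add_sub_cancel]
  field_simp
  ring

/-- The one-step kernel with the factor at `h` removed. -/
noncomputable def stepRest (K H : ℕ) (h : Fin H) (b : ℝ) (y' y : Fin H → Fin K) : ℝ :=
  ∏ i ∈ Finset.univ.erase h, ((1 - b) * (if y' i = y i then (1 : ℝ) else 0) + b / K)

lemma stepUnif_eq (K H : ℕ) (h : Fin H) (b : ℝ) (x y : Fin H → Fin K) (hne : x h ≠ y h) :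
    stepUnif K H b x y = b / K * stepRest K H h b x y := by
  unfold stepUnif stepRest
  rw [← Finset.mul_prod_erase _ _ (Finset.mem_univ h)]
  simp [hne]

lemma stepRest_cont (K H : ℕ) (h : Fin H) (x y : Fin H → Fin K) :
    Continuous (fun b => stepRest K H h b x y) := by
  unfold stepRest
  fun_prop

lemma stepRest_zero_sum (K H : ℕ) (h : Fin H) (a : Fin K) (x : Fin H → Fin K)
    (f : (Fin H → Fin K) → ℝ) :
    ∑ y ∈ Finset.univ.filter (fun y : Fin H → Fin K => y h = a),
      f y * stepRest K H h 0 x y = f (Function.update x h a) := by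
  rw [Finset.sum_eq_single (Function.update x h a)]
  · have : stepRest K H h 0 x (Function.update x h a) = 1 := by
      unfold stepRest
      refine Finset.prod_eq_one fun i hi => ?_
      rw [Function.update_of_ne (Finset.ne_of_mem_erase hi)]
      simp
    simp [this]
  · intro y hy hne
    simp only [Finset.mem_filter, Finset.mem_univ, true_and] at hy
    have : ∃ i, i ≠ h ∧ x i ≠ y i := by
      by_contra! hc
      apply hne
      ext i
      by_cases hi : i = h
      · subst hi; simp [hy]
      · simp [Function.update_of_ne hi, hc i hi]
    obtain ⟨i, hi, hxy⟩ := this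
    have : stepRest K H h 0 x y = 0 := by
      unfold stepRest
      exact Finset.prod_eq_zero (Finset.mem_erase.2 ⟨hi, Finset.mem_univ i⟩) (by simp [hxy])
    simp [this]
  · intro hn
    simp at hn

/-- Theorem 2.1 (Rate separation for uniform diffusion).  Under the noise-schedule
assumption at every `σ ∈ (0,1)`, the limit `L(σ)` of the normalized single-token
reverse probabilities exists, and for small `σ`:
`|L(σ) − (σ/K)⁻¹ ρ| ≤ C` if the edit moves toward the support,
`|L(σ) − ρ| ≤ C σ` if it preserves the distance, and
`|L(σ) − (σ/K) ρ| ≤ C σ²` if it moves away, where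
`ρ = p(proj_D(x^{h→a}))/p(proj_D(x))`. -/
theorem uniform_rate_separation
    (K H : ℕ) (hK : 2 ≤ K) (hH : 1 ≤ H)
    (p : (Fin H → Fin K) → ℝ) (hp0 : ∀ v, 0 ≤ p v) (hp1 : ∑ v, p v = 1)
    (β : ℕ → ℕ → ℝ) (hβ : ∀ T, ∀ t ∈ Finset.Icc 1 T, β T t ∈ Set.Ioo (0 : ℝ) 1)
    (tsel : ℝ → ℕ → ℕ)
    (htsel : ∀ σ ∈ Set.Ioo (0 : ℝ) 1, ∀ T, 1 ≤ T → tsel σ T ∈ Finset.Icc 1 T ∧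
      ∀ s ∈ Finset.Icc 1 T, |cumNoise β T (tsel σ T) - σ| ≤ |cumNoise β T s - σ|)
    (hsched : ∀ σ ∈ Set.Ioo (0 : ℝ) 1,
      Tendsto (fun T => cumNoise β T (tsel σ T)) atTop (nhds σ) ∧
      Tendsto (fun T => β T (tsel σ T)) atTop (nhds 0))
    (x : Fin H → Fin K) (h : Fin H) (a : Fin K) (ha : a ≠ x h) :
    ∃ L : ℝ → ℝ,
      (∀ σ ∈ Set.Ioo (0 : ℝ) 1,
        Tendsto (fun T => revUnif K H p β T (tsel σ T) h a x / (β T (tsel σ T) / K))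
          atTop (nhds (L σ))) ∧
      ∃ C > (0 : ℝ), ∃ σ₀ ∈ Set.Ioo (0 : ℝ) 1, ∀ σ ∈ Set.Ioo (0 : ℝ) σ₀,
        (distSupp K H p (Function.update x h a) < distSupp K H p x →
          |L σ - (σ / K)⁻¹ *
              (projMass K H p (Function.update x h a) / projMass K H p x)| ≤ C) ∧
        (distSupp K H p (Function.update x h a) = distSupp K H p x →
          |L σ - projMass K H p (Function.update x h a) / projMass K H p x| ≤ C * σ) ∧
        (distSupp K H p x < distSupp K H p (Function.update x h a) →
          |L σ - (σ / K) *
              (projMass K H p (Function.update x h a) / projMass K H p x)| ≤ C * σ ^ 2) := by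
  have hKpos : (0 : ℝ) < K := by positivity
  have hK1 : (1 : ℝ) ≤ K := by exact_mod_cast (by omega : 1 ≤ K)
  set z := Function.update x h a with hz
  refine ⟨fun σ => qUnif K H p σ z / qUnif K H p σ x, ?_, ?_⟩
  · intro σ hσ
    obtain ⟨hs, hb⟩ := hsched σ hσ
    have hpred : Tendsto (fun T => 1 - (1 - cumNoise β T (tsel σ T)) / (1 - β T (tsel σ T)))
        atTop (nhds σ) := by
      have h1 : Tendsto (fun T => 1 - (1 - cumNoise β T (tsel σ T)) / (1 - β T (tsel σ T)))
          atTop (nhds (1 - (1 - σ) / (1 - 0))) :=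
        tendsto_const_nhds.sub
          ((tendsto_const_nhds.sub hs).div (tendsto_const_nhds.sub hb) (by norm_num))
      simpa using h1
    have hlim : Tendsto (fun T =>
        (∑ y ∈ Finset.univ.filter (fun y : Fin H → Fin K => y h = a),
          qUnif K H p (1 - (1 - cumNoise β T (tsel σ T)) / (1 - β T (tsel σ T))) y *
            stepRest K H h (β T (tsel σ T)) x y) / qUnif K H p (cumNoise β T (tsel σ T)) x)
        atTop (nhds (qUnif K H p σ z / qUnif K H p σ x)) := by
      refine Tendsto.div ?_ (((qUnif_cont K H p x).tendsto σ).comp hs)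
        (qUnif_pos K H hK p hp0 hp1 x σ hσ).ne'
      rw [hz, ← stepRest_zero_sum K H h a x (fun y => qUnif K H p σ y)]
      refine tendsto_finsetSum _ fun y _ => ?_
      exact (((qUnif_cont K H p y).tendsto σ).comp hpred).mul
        (((stepRest_cont K H h x y).tendsto 0).comp hb)
    refine hlim.congr' ?_
    filter_upwards [eventually_ge_atTop 1] with T hT
    have hmem := (htsel σ hσ T hT).1
    have hbm := hβ T _ hmem
    have ht1 : 1 ≤ tsel σ T := (Finset.mem_Icc.1 hmem).1
    unfold revUnif
    rw [cumNoise_pred β T _ ht1 hbm.2, div_right_comm]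
    congr 1
    have hbK : β T (tsel σ T) / K ≠ 0 := (div_pos hbm.1 hKpos).ne'
    rw [eq_div_iff hbK, Finset.sum_mul]
    refine Finset.sum_congr rfl fun y hy => ?_
    simp only [Finset.mem_filter, Finset.mem_univ, true_and] at hy
    rw [stepUnif_eq K H h _ x y (by rw [hy]; exact ha.symm)]
    ring
  · have hPx := projMass_pos K H p hp0 hp1 x
    have hd : DifferentiableAt ℝ (fun σ => gAux K H p σ z / gAux K H p σ x) 0 :=
      (gAux_diff K H p z 0).div (gAux_diff K H p x 0) (by rw [gAux_zero]; exact hPx.ne')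
    obtain ⟨c, hc⟩ := hd.isBigO_sub.bound
    obtain ⟨ε, hε, hball⟩ := Metric.eventually_nhds_iff.1 hc
    have hzx : distSupp K H p z ≤ distSupp K H p x + 1 := by
      have h1 := distSupp_lip K H p z x hp1
      have h2 := hammingDist_update_le K H x h a
      rw [hammingDist_comm] at h1
      rw [← hz] at h2
      omega
    have hxz : distSupp K H p x ≤ distSupp K H p z + 1 := by
      have h1 := distSupp_lip K H p x z hp1
      have h2 := hammingDist_update_le K H x h a
      rw [← hz] at h2
      omega
    set M := max c 1 with hM
    have hM1 : 1 ≤ M := le_max_right _ _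
    refine ⟨M * K, by positivity, min ε (1 / 2), ⟨lt_min hε (by norm_num),
      (min_le_right _ _).trans_lt (by norm_num)⟩, ?_⟩
    intro σ hσ
    have hσ0 : 0 < σ := hσ.1
    have hσε : σ < ε := hσ.2.trans_le (min_le_left _ _)
    have hbd := @hball σ (by simpa [abs_of_pos hσ0] using hσε)
    simp only [gAux_zero, sub_zero, Real.norm_eq_abs, abs_of_pos hσ0] at hbd
    have hbd' : |gAux K H p σ z / gAux K H p σ x - projMass K H p z / projMass K H p x| ≤ M * σ :=
      hbd.trans (mul_le_mul_of_nonneg_right (le_max_left _ _) hσ0.le)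
    have hs : 0 < σ / K := div_pos hσ0 hKpos
    simp only [qUnif_eq]
    set R := gAux K H p σ z / gAux K H p σ x with hR
    set ρ := projMass K H p z / projMass K H p x with hρ
    have hsK : σ / K * K = σ := by field_simp
    refine ⟨fun hlt => ?_, fun heq => ?_, fun hlt => ?_⟩
    · have e : distSupp K H p x = distSupp K H p z + 1 := by omega
      have : (σ / K) ^ distSupp K H p z * gAux K H p σ z /
          ((σ / K) ^ distSupp K H p x * gAux K H p σ x) = (σ / K)⁻¹ * R := by
        rw [mul_div_mul_comm, ← hR, e, pow_succ]
        congr 1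
        field_simp
      rw [this, ← mul_sub, abs_mul, abs_of_pos (inv_pos.2 hs), inv_mul_le_iff₀ hs]
      calc _ ≤ M * σ := hbd'
        _ = _ := by rw [← hsK]; field_simp
    · have : (σ / K) ^ distSupp K H p z * gAux K H p σ z /
          ((σ / K) ^ distSupp K H p x * gAux K H p σ x) = R := by
        rw [mul_div_mul_comm, ← hR, heq, div_self (pow_pos hs _).ne', one_mul]
      rw [this]
      refine hbd'.trans (mul_le_mul_of_nonneg_right ?_ hσ0.le)
      nlinarith
    · have e : distSupp K H p z = distSupp K H p x + 1 := by omega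
      have : (σ / K) ^ distSupp K H p z * gAux K H p σ z /
          ((σ / K) ^ distSupp K H p x * gAux K H p σ x) = (σ / K) * R := by
        rw [mul_div_mul_comm, ← hR, e, pow_succ]
        congr 1
        field_simp
      rw [this, ← mul_sub, abs_mul, abs_of_pos hs]
      have hsσ : σ / K ≤ σ := div_le_self hσ0.le hK1
      calc σ / K * |R - ρ| ≤ σ * (M * σ) := by gcongr
        _ = M * σ ^ 2 := by ring
        _ ≤ M * K * σ ^ 2 := by
          refine mul_le_mul_of_nonneg_right ?_ (by positivity)
          nlinarith
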